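/- Let R be a commutative ring and n > 2 even. If a block-diagonal matrix diag(I, g) lies in Spin_{2n}(R), then g = u·I_{2^{n-1}} for some u ∈ R with u² = 1. Consequently the kernel of the projection χ : Spin_{2n}(R) → GL_{2^{n-1}}(R), (g₁,g₂) ↦ g₁, is isomorphic to μ₂(R) = {u ∈ R : u² = 1}, giving an exact sequence 1 → μ₂(R) → Spin_{2n}(R) → GL_{2^{n-1}}(R). -/

import Mathlib

open Matrix

noncomputable section

/-- Reindexing equivalence `Fin (2 ^ n) ⊕ Fin (2 ^ n) ≃ Fin (2 ^ (n + 1))`. -/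
def pow2Equiv (n : ℕ) : Fin (2 ^ n) ⊕ Fin (2 ^ n) ≃ Fin (2 ^ (n + 1)) :=
  finSumFinEquiv.trans (finCongr (by rw [pow_succ]; ring))

/-- The Suslin matrix `S_n(v, w)` of size `2 ^ n` associated to `v, w : Fin (n+1) → R`. -/
def sus (R : Type) [CommRing R] : (n : ℕ) → (Fin (n + 1) → R) → (Fin (n + 1) → R) →
    Matrix (Fin (2 ^ n)) (Fin (2 ^ n)) R
  | 0, v, _ => v 0 • 1
  | n + 1, v, w =>
      Matrix.reindex (pow2Equiv n) (pow2Equiv n)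
        (Matrix.fromBlocks (v 0 • 1) (sus R n (v ∘ Fin.succ) (w ∘ Fin.succ))
          (-(sus R n (w ∘ Fin.succ) (v ∘ Fin.succ))ᵀ) (w 0 • 1))

/-- The conjugate Suslin matrix `S̄_n(v, w) = S_n(w, v)ᵀ`. -/
def susBar (R : Type) [CommRing R] (n : ℕ) (v w : Fin (n + 1) → R) :
    Matrix (Fin (2 ^ n)) (Fin (2 ^ n)) R :=
  (sus R n w v)ᵀ

/-- Suslin's matrices `J_n`. -/
def Jmat (R : Type) [CommRing R] : (n : ℕ) → Matrix (Fin (2 ^ n)) (Fin (2 ^ n)) R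
  | 0 => 1
  | n + 1 =>
      if Even (n + 1) then
        Matrix.reindex (pow2Equiv n) (pow2Equiv n)
          (Matrix.fromBlocks (Jmat R n) 0 0 (-(Jmat R n)))
      else
        Matrix.reindex (pow2Equiv n) (pow2Equiv n)
          (Matrix.fromBlocks 0 (Jmat R n) (-(Jmat R n)) 0)

/-- The involution `M ↦ M* = J_n · Mᵀ · J_nᵀ`. -/
def invol (R : Type) [CommRing R] (n : ℕ) (M : Matrix (Fin (2 ^ n)) (Fin (2 ^ n)) R) :
    Matrix (Fin (2 ^ n)) (Fin (2 ^ n)) R :=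
  Jmat R n * Mᵀ * (Jmat R n)ᵀ

/-- `φ(v, w) = [[0, S_n(v,w)], [S̄_n(v,w), 0]]` (note the shift: vectors in `R^{n+1}`,
matrices of size `2 ^ (n + 1)`). -/
def phiMat (R : Type) [CommRing R] (n : ℕ) (v w : Fin (n + 1) → R) :
    Matrix (Fin (2 ^ (n + 1))) (Fin (2 ^ (n + 1))) R :=
  Matrix.reindex (pow2Equiv n) (pow2Equiv n)
    (Matrix.fromBlocks 0 (sus R n v w) (susBar R n v w) 0)

/-- The set of Suslin matrices of size `2 ^ m`. -/
def SuslinSet (R : Type) [CommRing R] (m : ℕ) : Set (Matrix (Fin (2 ^ m)) (Fin (2 ^ m)) R) :=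
  {S | ∃ v w : Fin (m + 1) → R, S = sus R m v w}

/-- The image of the hyperbolic space `R^{m+1} ⊕ R^{m+1}` inside the Clifford algebra
`M_{2^{m+1}}(R)`. -/
def PhiSet (R : Type) [CommRing R] (m : ℕ) :
    Set (Matrix (Fin (2 ^ (m + 1))) (Fin (2 ^ (m + 1))) R) :=
  {x | ∃ v w : Fin (m + 1) → R, x = phiMat R m v w}

/-- The block diagonal matrix `diag(g₁, g₂)`. -/
def diagBlock (R : Type) [CommRing R] (m : ℕ)
    (g₁ g₂ : Matrix (Fin (2 ^ m)) (Fin (2 ^ m)) R) :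
    Matrix (Fin (2 ^ (m + 1))) (Fin (2 ^ (m + 1))) R :=
  Matrix.reindex (pow2Equiv m) (pow2Equiv m) (Matrix.fromBlocks g₁ 0 0 g₂)

/-- `Spin_{2(m+1)}(R)`, as the set of pairs `(g₁, g₂)` such that `x = diag(g₁, g₂)`
satisfies `x · x* = 1` and conjugation by `x` maps the image of the hyperbolic space
onto itself. -/
def SpinPair (R : Type) [CommRing R] (m : ℕ) :
    Set (Matrix (Fin (2 ^ m)) (Fin (2 ^ m)) R × Matrix (Fin (2 ^ m)) (Fin (2 ^ m)) R) :=
  {p | IsUnit p.1 ∧ IsUnit p.2 ∧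
    diagBlock R m p.1 p.2 * invol R (m + 1) (diagBlock R m p.1 p.2) = 1 ∧
    (fun y => diagBlock R m p.1 p.2 * y * (diagBlock R m p.1 p.2)⁻¹) '' PhiSet R m
      = PhiSet R m}

/-- The group `G_m(R)` of `g ∈ GL_{2^m}(R)` such that `g · S · g*` is a Suslin matrix
for every Suslin matrix `S`. -/
def GSet (R : Type) [CommRing R] (m : ℕ) : Set (Matrix (Fin (2 ^ m)) (Fin (2 ^ m)) R) :=
  {g | IsUnit g ∧ ∀ S ∈ SuslinSet R m, g * S * invol R m g ∈ SuslinSet R m}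

/-- The group `SG_m(R)` of `g ∈ G_m(R)` preserving the length `l(S(v,w)) = v ⬝ᵥ w`. -/
def SGSet (R : Type) [CommRing R] (m : ℕ) : Set (Matrix (Fin (2 ^ m)) (Fin (2 ^ m)) R) :=
  {g | g ∈ GSet R m ∧ ∀ v w v' w' : Fin (m + 1) → R,
    g * sus R m v w * invol R m g = sus R m v' w' → v' ⬝ᵥ w' = v ⬝ᵥ w}

/-- The hyperbolic quadratic form `q(v, w) = v ⬝ᵥ w` on `R^n ⊕ R^n`. -/
def hypForm (R : Type) [CommRing R] (n : ℕ) :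
    QuadraticForm R ((Fin n → R) × (Fin n → R)) :=
  LinearMap.BilinMap.toQuadraticMap
    (LinearMap.mk₂ R (fun x y => x.1 ⬝ᵥ y.2)
      (fun x x' y => by simp [add_dotProduct])
      (fun c x y => by simp [smul_dotProduct])
      (fun x y y' => by simp [dotProduct_add])
      (fun x c y => by simp [dotProduct_smul]))

/-- `E_i = S_m(e_i, 0)`. -/
def Emat (R : Type) [CommRing R] (m : ℕ) (i : Fin (m + 1)) :
    Matrix (Fin (2 ^ m)) (Fin (2 ^ m)) R :=
  sus R m (Pi.single i 1) 0

/-- `F_i = S_m(0, e_i)`. -/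
def Fmat (R : Type) [CommRing R] (m : ℕ) (i : Fin (m + 1)) :
    Matrix (Fin (2 ^ m)) (Fin (2 ^ m)) R :=
  sus R m 0 (Pi.single i 1)


/-- Blocks reindexed to `Fin (2 ^ (n + 1))`. -/
def blk (R : Type) [CommRing R] (n : ℕ) (A B C D : Matrix (Fin (2 ^ n)) (Fin (2 ^ n)) R) :
    Matrix (Fin (2 ^ (n + 1))) (Fin (2 ^ (n + 1))) R :=
  Matrix.reindex (pow2Equiv n) (pow2Equiv n) (Matrix.fromBlocks A B C D)

theorem blk_mul (R : Type) [CommRing R] (n : ℕ)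
    (A B C D A' B' C' D' : Matrix (Fin (2 ^ n)) (Fin (2 ^ n)) R) :
    blk R n A B C D * blk R n A' B' C' D' =
      blk R n (A * A' + B * C') (A * B' + B * D') (C * A' + D * C') (C * B' + D * D') := by
  unfold blk
  rw [Matrix.reindex_apply, Matrix.reindex_apply, Matrix.reindex_apply,
    Matrix.submatrix_mul_equiv, Matrix.fromBlocks_multiply]

theorem blk_one (R : Type) [CommRing R] (n : ℕ) : blk R n 1 0 0 1 = 1 := by
  unfold blk
  rw [Matrix.fromBlocks_one, Matrix.reindex_apply, Matrix.submatrix_one_equiv]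

theorem blk_zero (R : Type) [CommRing R] (n : ℕ) : blk R n 0 0 0 0 = 0 := by
  unfold blk
  rw [Matrix.fromBlocks_zero, Matrix.reindex_apply, Matrix.submatrix_zero]; rfl

theorem blk_transpose (R : Type) [CommRing R] (n : ℕ)
    (A B C D : Matrix (Fin (2 ^ n)) (Fin (2 ^ n)) R) :
    (blk R n A B C D)ᵀ = blk R n Aᵀ Cᵀ Bᵀ Dᵀ := by
  unfold blk
  rw [Matrix.reindex_apply, Matrix.transpose_submatrix, Matrix.fromBlocks_transpose,
    Matrix.reindex_apply]

theorem blk_smul (R : Type) [CommRing R] (n : ℕ) (u : R)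
    (A B C D : Matrix (Fin (2 ^ n)) (Fin (2 ^ n)) R) :
    u • blk R n A B C D = blk R n (u • A) (u • B) (u • C) (u • D) := by
  unfold blk
  rw [Matrix.reindex_apply, Matrix.reindex_apply, ← Matrix.fromBlocks_smul]; rfl

theorem blk_inj (R : Type) [CommRing R] (n : ℕ)
    {A B C D A' B' C' D' : Matrix (Fin (2 ^ n)) (Fin (2 ^ n)) R}
    (h : blk R n A B C D = blk R n A' B' C' D') : A = A' ∧ B = B' ∧ C = C' ∧ D = D' := by
  unfold blk at h
  exact Matrix.fromBlocks_inj.1 ((Matrix.reindex _ _).injective h)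

theorem sus_succ (R : Type) [CommRing R] (n : ℕ) (v w : Fin (n + 2) → R) :
    sus R (n + 1) v w = blk R n (v 0 • 1) (sus R n (v ∘ Fin.succ) (w ∘ Fin.succ))
          (-(sus R n (w ∘ Fin.succ) (v ∘ Fin.succ))ᵀ) (w 0 • 1) := rfl

theorem sus_smul (R : Type) [CommRing R] (u : R) (n : ℕ) (v w : Fin (n + 1) → R) :
    sus R n (u • v) (u • w) = u • sus R n v w := by
  induction n with
  | zero => simp [sus, smul_smul]
  | succ n ih =>
    rw [sus_succ, sus_succ, blk_smul]
    have e : ∀ x : Fin (n + 2) → R, (u • x) ∘ Fin.succ = u • (x ∘ Fin.succ) := fun _ => rfl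
    rw [e, e, ih, ih]
    simp [smul_smul]

theorem sus_zero (R : Type) [CommRing R] (n : ℕ) : sus R n 0 0 = 0 := by
  have := sus_smul R 0 n 0 0
  simpa using this

theorem sus_cons (R : Type) [CommRing R] (n : ℕ) (a b : R) (v w : Fin (n + 1) → R) :
    sus R (n + 1) (Fin.cons a v) (Fin.cons b w) =
      blk R n (a • 1) (sus R n v w) (-(sus R n w v)ᵀ) (b • 1) := by
  rw [sus_succ]; rfl

theorem sus_swap_zero (R : Type) [CommRing R] (n : ℕ) (v w : Fin (n + 2) → R)
    (h : sus R (n + 1) v w = 0) : sus R (n + 1) w v = 0 := by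
  rw [sus_succ, ← blk_zero] at h
  obtain ⟨h1, h2, h3, h4⟩ := blk_inj R n h
  have h5 : sus R n (w ∘ Fin.succ) (v ∘ Fin.succ) = 0 := by simpa using h3
  rw [sus_succ, h1, h2, h4, h5]
  simp [blk_zero]

theorem smul_one_inj (R : Type) [CommRing R] (n : ℕ) {a b : R}
    (h : a • (1 : Matrix (Fin (2 ^ n)) (Fin (2 ^ n)) R) = b • 1) : a = b := by
  have := congrFun (congrFun h ⟨0, by positivity⟩) ⟨0, by positivity⟩
  simpa using this

/-- Core: a right multiplier of the Suslin matrices is scalar. -/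
theorem core (R : Type) [CommRing R] (k : ℕ)
    (h : Matrix (Fin (2 ^ (k + 2))) (Fin (2 ^ (k + 2))) R)
    (H : ∀ v w, ∃ v' w', sus R (k + 2) v w * h = sus R (k + 2) v' w') :
    ∃ u : R, h = u • 1 := by
  obtain ⟨a, b, hab⟩ : ∃ a b, h = sus R (k + 2) a b := by
    obtain ⟨a, b, hab⟩ := H (Fin.cons 1 0) (Fin.cons 1 0)
    refine ⟨a, b, ?_⟩
    rw [sus_cons, sus_zero] at hab
    simpa [blk_one] using hab
  rw [sus_succ] at hab
  have hu : sus R (k + 1) (a ∘ Fin.succ) (b ∘ Fin.succ) = 0 := by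
    obtain ⟨p, q, hpq⟩ := H (Fin.cons 1 0) (Fin.cons 0 0)
    rw [sus_cons, sus_zero, hab, blk_mul, sus_succ] at hpq
    obtain ⟨-, h2, h3, -⟩ := blk_inj R _ hpq
    have h5 : sus R (k + 1) (q ∘ Fin.succ) (p ∘ Fin.succ) = 0 := by
      simpa using h3.symm
    rw [sus_swap_zero R k _ _ h5] at h2
    simpa using h2
  have hl := sus_swap_zero R k _ _ hu
  rw [hu, hl] at hab
  obtain ⟨p, q, hpq⟩ := H (Fin.cons 0 (Fin.cons 1 0)) (Fin.cons 0 (Fin.cons 0 0))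
  rw [sus_cons, sus_cons, sus_cons, sus_zero, hab, blk_mul, sus_succ] at hpq
  obtain ⟨-, h2, h3, -⟩ := blk_inj R _ hpq
  rw [sus_succ] at h2 h3
  simp only [Matrix.transpose_zero, neg_zero, zero_smul, Matrix.mul_smul, mul_one,
    mul_zero, zero_add, add_zero, blk_smul, blk_transpose, smul_neg, neg_inj,
    Matrix.transpose_one, Matrix.transpose_smul, smul_zero] at h2 h3
  obtain ⟨h4, -, -, -⟩ := blk_inj R _ h2
  obtain ⟨-, -, -, h5⟩ := blk_inj R _ h3
  rw [one_smul] at h4 h5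
  have e : b 0 = a 0 :=
    (smul_one_inj R k h4).trans (smul_one_inj R k h5).symm
  refine ⟨a 0, ?_⟩
  rw [hab, e, ← blk_one R (k + 1), blk_smul]
  simp

theorem Jmat_mul_transpose (R : Type) [CommRing R] (n : ℕ) :
    Jmat R n * (Jmat R n)ᵀ = 1 := by
  induction n with
  | zero => simp [Jmat]
  | succ n ih =>
    rw [Jmat]
    split_ifs
    · change blk R n _ _ _ _ * (blk R n _ _ _ _)ᵀ = 1
      rw [blk_transpose, blk_mul]
      simp [ih, blk_one]
    · change blk R n _ _ _ _ * (blk R n _ _ _ _)ᵀ = 1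
      rw [blk_transpose, blk_mul]
      simp [ih, blk_one]

theorem diag_invol (R : Type) [CommRing R] (m : ℕ) (heven : Even (m + 1)) (u : R) :
    diagBlock R m 1 (u • 1) * invol R (m + 1) (diagBlock R m 1 (u • 1)) =
      blk R m 1 0 0 ((u ^ 2) • 1) := by
  have hJ : Jmat R (m + 1) = blk R m (Jmat R m) 0 0 (-(Jmat R m)) := by
    rw [Jmat, if_pos heven]; rfl
  unfold invol
  rw [hJ]
  change blk R m _ _ _ _ * (_ * (blk R m _ _ _ _)ᵀ * _) = _
  simp only [blk_transpose, blk_mul]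
  simp [Jmat_mul_transpose, smul_smul, pow_two]

theorem conj_phi (R : Type) [CommRing R] (m : ℕ)
    (g h : Matrix (Fin (2 ^ m)) (Fin (2 ^ m)) R) (gh : g * h = 1) (v w : Fin (m + 1) → R) :
    diagBlock R m 1 g * phiMat R m v w * (diagBlock R m 1 g)⁻¹ =
      blk R m 0 (sus R m v w * h) (g * susBar R m v w) 0 := by
  have hi : (diagBlock R m 1 g)⁻¹ = blk R m 1 0 0 h := by
    apply Matrix.inv_eq_right_inv
    change blk R m _ _ _ _ * _ = 1
    rw [blk_mul]
    simp [gh, blk_one]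
  rw [hi]
  change blk R m _ _ _ _ * blk R m _ _ _ _ * _ = _
  rw [blk_mul, blk_mul]
  simp

theorem conj_phi_scalar (R : Type) [CommRing R] (m : ℕ) (u : R) (hu : u ^ 2 = 1)
    (v w : Fin (m + 1) → R) :
    diagBlock R m 1 (u • 1) * phiMat R m v w * (diagBlock R m 1 (u • 1))⁻¹ =
      phiMat R m (u • v) (u • w) := by
  rw [conj_phi R m (u • 1) (u • 1) (by
    rw [smul_mul_smul_comm, ← pow_two, hu, mul_one, one_smul])]
  unfold phiMat susBar
  rw [sus_smul, sus_smul]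
  simp [blk]

/-- for even `n > 2` (here `n = m + 1`), the kernel of the projection
`χ : Spin_{2n}(R) → GL_{2^{n-1}}(R)`, `(g₁, g₂) ↦ g₁`, consists exactly of the pairs
`(I, u·I)` with `u² = 1`; hence it is isomorphic to `μ₂(R)` and there is an exact sequence
`1 → μ₂(R) → Spin_{2n}(R) → GL_{2^{n-1}}(R)`. -/
theorem spin_kernel_mu2 (R : Type) [CommRing R] (m : ℕ) (heven : Even (m + 1))
    (hm : 2 < m + 1) :
    {g : Matrix (Fin (2 ^ m)) (Fin (2 ^ m)) R |
        ((1 : Matrix (Fin (2 ^ m)) (Fin (2 ^ m)) R), g) ∈ SpinPair R m} =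
      {g : Matrix (Fin (2 ^ m)) (Fin (2 ^ m)) R |
        ∃ u : R, u ^ 2 = 1 ∧ g = u • (1 : Matrix (Fin (2 ^ m)) (Fin (2 ^ m)) R)} := by
  ext g
  constructor
  · rintro ⟨-, hg, hx, himg⟩
    obtain ⟨h, gh⟩ := hg.exists_right_inv
    obtain ⟨k, rfl⟩ : ∃ k, m = k + 2 := ⟨m - 2, by omega⟩
    have hg' : g * h = 1 := gh
    have hg'' : h * g = 1 := mul_eq_one_comm.1 hg'
    obtain ⟨u, hu⟩ := core R k h (by
      intro v w
      have hm : (fun y => diagBlock R (k + 2) 1 g * y * (diagBlock R (k + 2) 1 g)⁻¹)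
          (phiMat R (k + 2) v w) ∈ PhiSet R (k + 2) := by
        rw [← himg]
        exact ⟨_, ⟨v, w, rfl⟩, rfl⟩
      obtain ⟨v', w', e⟩ := hm
      refine ⟨v', w', ?_⟩
      have e' := (conj_phi R (k + 2) g h hg' v w).symm.trans e
      exact (blk_inj R _ e').2.1)
    have gu : u • g = 1 := by simpa [hu] using hg'
    have hc := congrFun (congrFun gu ⟨0, by positivity⟩) ⟨0, by positivity⟩
    rw [Matrix.one_apply_eq, Matrix.smul_apply, smul_eq_mul] at hc
    set c := g ⟨0, by positivity⟩ ⟨0, by positivity⟩ with hcdef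
    have hgc : g = c • 1 := by
      rw [← gu, smul_smul, mul_comm c u, hc, one_smul]
    refine ⟨c, ?_, hgc⟩
    have hx' : diagBlock R (k + 2) 1 g * invol R (k + 2 + 1) (diagBlock R (k + 2) 1 g) = 1 := hx
    clear_value c
    subst hgc
    rw [diag_invol R _ heven, ← blk_one R (k + 2)] at hx'
    have := (blk_inj R _ hx').2.2.2
    exact smul_one_inj R (k + 2) (this.trans (one_smul R _).symm)
  · rintro ⟨u, hu, rfl⟩
    refine ⟨isUnit_one, ?_, ?_, ?_⟩
    · exact IsUnit.of_mul_eq_one (u • 1) (by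
    rw [smul_mul_smul_comm, ← pow_two, hu, mul_one, one_smul])
    · refine (diag_invol R m heven u).trans ?_
      rw [hu, one_smul, blk_one]
    · ext y
      constructor
      · rintro ⟨_, ⟨v, w, rfl⟩, rfl⟩
        exact ⟨u • v, u • w, conj_phi_scalar R m u hu v w⟩
      · rintro ⟨v, w, rfl⟩
        refine ⟨_, ⟨u • v, u • w, rfl⟩, ?_⟩
        refine (conj_phi_scalar R m u hu _ _).trans ?_
        rw [smul_smul, smul_smul, ← pow_two, hu, one_smul, one_smul]
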